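/- For every integer i ≥ 1, the connected component of the point r = (0,-1) in the space V_i is not an open subset of V_i (so V_i is not locally connected). -/

import Mathlib

open Real Set

/-- The deleted topologist's sine curve `T`. -/
def T : Set (ℝ × ℝ) :=
  {p : ℝ × ℝ | (0 < p.1 ∧ p.1 ≤ 1 ∧ p.2 = Real.sin (1 / p.1)) ∨
    (p.1 = 0 ∧ -1 ≤ p.2 ∧ p.2 < 0)}

def r : ℝ × ℝ := (0, -1)

noncomputable def s : ℝ × ℝ := (1, Real.sin 1)

def V : Set (ℝ × ℝ) := T ∩ {p : ℝ × ℝ | p.2 < 0}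

def Vi (i : ℕ) : Set (ℝ × ℝ) := V ∪ (T ∩ {p : ℝ × ℝ | p.1 > 1 / (i : ℝ)})

lemma r_mem_T : r ∈ T := Or.inr ⟨rfl, le_refl _, by norm_num [r]⟩

lemma r_mem_Vi (i : ℕ) : r ∈ Vi i := Or.inl ⟨r_mem_T, by norm_num [r]⟩

lemma s_mem_T : s ∈ T := Or.inl ⟨one_pos, le_refl _, by norm_num [s]⟩

lemma s_mem_Vi {i : ℕ} (hi : 2 ≤ i) : s ∈ Vi i := by
  refine Or.inr ⟨s_mem_T, ?_⟩
  have h2 : (1 : ℝ) < i := by exact_mod_cast lt_of_lt_of_le one_lt_two (by exact_mod_cast hi)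
  show (1 : ℝ) / (i : ℝ) < s.1
  rw [show s.1 = 1 from rfl, div_lt_one (by linarith)]
  exact h2

lemma Vi_mono {i j : ℕ} (hi : 1 ≤ i) (hij : i ≤ j) : Vi i ⊆ Vi j := by
  apply Set.union_subset_union_right
  apply Set.inter_subset_inter_right
  intro p hp
  have hi' : (0 : ℝ) < i := by exact_mod_cast hi
  have hij' : (i : ℝ) ≤ j := by exact_mod_cast hij
  exact lt_of_le_of_lt (one_div_le_one_div_of_le hi' hij') hp

lemma aux_tendsto (c : ℝ) :
    Filter.Tendsto (fun n : ℕ => 1 / (c + n * (2 * π))) Filter.atTop (nhds 0) := by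
  have h : Filter.Tendsto (fun n : ℕ => c + n * (2 * π)) Filter.atTop Filter.atTop :=
    Filter.tendsto_atTop_add_const_left _ _
      (tendsto_natCast_atTop_atTop.atTop_mul_const (by positivity))
  simp only [one_div]
  exact h.inv_tendsto_atTop

lemma aux_sin (n : ℕ) : Real.sin (3 * π / 2 + n * (2 * π)) = -1 := by
  rw [Real.sin_add_nat_mul_two_pi, show 3 * π / 2 = π / 2 + π by ring, Real.sin_add_pi,
    Real.sin_pi_div_two]

lemma aux_mem (i n : ℕ) : ((1 / (3 * π / 2 + n * (2 * π)), -1) : ℝ × ℝ) ∈ Vi i := by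
  have hpi := Real.pi_gt_three
  have hn : (0 : ℝ) ≤ n * (2 * π) := by positivity
  refine Or.inl ⟨Or.inl ⟨?_, ?_, ?_⟩, ?_⟩
  · show 0 < 1 / (3 * π / 2 + n * (2 * π))
    positivity
  · show 1 / (3 * π / 2 + n * (2 * π)) ≤ 1
    rw [div_le_one (by positivity)]
    linarith
  · show -1 = Real.sin (1 / (1 / (3 * π / 2 + n * (2 * π))))
    rw [one_div_one_div, aux_sin]
  · show (-1 : ℝ) < 0
    norm_num

/-- For every `i ≥ 1`, the connected component of `r = (0,-1)` in `Vi i`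
is not open in `Vi i`. -/
theorem stmt_6 : ∀ i : ℕ, 1 ≤ i →
    ¬ IsOpen (connectedComponent (⟨r, r_mem_Vi i⟩ : Vi i)) := by
  intro i hi hopen
  have hi' : (0 : ℝ) < 1 / (i : ℝ) := by
    have : (0 : ℝ) < i := by exact_mod_cast hi
    positivity
  have hq : Filter.Tendsto (fun n : ℕ => (⟨_, aux_mem i n⟩ : Vi i)) Filter.atTop
      (nhds (⟨r, r_mem_Vi i⟩ : Vi i)) := by
    rw [tendsto_subtype_rng]
    exact (aux_tendsto (3 * π / 2)).prodMk_nhds tendsto_const_nhds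
  obtain ⟨m, hm⟩ := (hq.eventually (hopen.mem_nhds mem_connectedComponent)).exists
  have hb : (0 : ℝ) < 1 / (3 * π / 2 + m * (2 * π)) := by positivity
  obtain ⟨n, hn1, hn2⟩ := (((aux_tendsto (π / 2)).eventually (gt_mem_nhds hb)).and
    ((aux_tendsto (π / 2)).eventually (gt_mem_nhds hi'))).exists
  have hpos : (0 : ℝ) < 1 / (π / 2 + n * (2 * π)) := by positivity
  have hpre : IsPreconnected ((fun p : Vi i => p.1.1) ''
      connectedComponent (⟨r, r_mem_Vi i⟩ : Vi i)) :=
    isPreconnected_connectedComponent.image _ (by fun_prop)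
  obtain ⟨⟨⟨x, y⟩, hp⟩, -, hx⟩ := hpre.ordConnected.out
    (mem_image_of_mem _ mem_connectedComponent) (mem_image_of_mem _ hm) ⟨hpos.le, hn1.le⟩
  change x = 1 / (π / 2 + n * (2 * π)) at hx
  rcases hp with ⟨hT, hy⟩ | ⟨-, hxi⟩
  · change y < 0 at hy
    rcases hT with ⟨-, -, h⟩ | ⟨h, -⟩
    · change y = Real.sin (1 / x) at h
      rw [hx, one_div_one_div, Real.sin_add_nat_mul_two_pi, Real.sin_pi_div_two] at h
      linarith
    · change x = 0 at h
      linarith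
  · change 1 / (i : ℝ) < x at hxi
    linarith
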